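/- arXiv:2005.10928 — 4 statements merged into one kernel-verified Lean document; each statement's English description precedes it below -/
import Mathlib

section
/- Let X be a metric space, t₀ ≥ 0, and let T, T₀ : [t₀,∞) × X → X be two families of maps. Let A, A₀ ⊆ X be nonempty bounded sets that are invariant, i.e. T(t)(A) = A and T₀(t)(A₀) = A₀ for every t ≥ t₀, and let D ⊆ X be a set with A ∪ A₀ ⊆ D. Assume there is a function Θ : [t₀,∞) → (0,∞) such that dist_H(T(t)(D), A) ≤ Θ(t) and dist_H(T₀(t)(D), A₀) ≤ Θ(t) for all t ≥ t₀ (uniform attraction), and there are constants C > 0, L > 0 and δ ≥ 0 such that d(T(t)x, T₀(t)y) ≤ C e^{L t} (d(x,y) + δ) for all x, y ∈ D and all t ≥ t₀ (comparison of the two evolutions). Then for every t ≥ t₀ the symmetric Hausdorff distance satisfies d_H(A, A₀) ≤ C e^{L t} δ + Θ(t); in particular d_H(A, A₀) ≤ inf_{t ≥ t₀} 2 ( C e^{L t} δ + Θ(t) ). -/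
/-!
By invariance every `a ∈ A` is `T t x` with `x ∈ A ⊆ D`. Running both evolutions from the same
point `x` makes `dist x x` vanish in the comparison estimate, so `T t x` is within `C e^{L t} δ`
of `T₀ t x`, which in turn is within `Θ t` of `A₀` by attraction. Exchanging the roles of the two
families bounds the other semidistance. The infimum bound follows since `d_H ≥ 0` gives
`d_H ≤ 2 d_H`.
-/

/-- **Equi-attraction gives a rate of convergence of attractors** (Theorem A.2).
Let `X` be a metric space, `T, T₀ : [t₀,∞) × X → X` two families of maps with
invariant nonempty bounded sets `A, A₀ ⊆ D`.  If both families attract `D` to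
their invariant sets with the uniform rate `Θ`, and the two evolutions compare as
`d(T(t)x, T₀(t)y) ≤ C e^{L t}(d(x,y) + δ)` on `D`, then for every `t ≥ t₀`
`d_H(A, A₀) ≤ C e^{L t} δ + Θ(t)`, and in particular `d_H(A, A₀)` is bounded by
`inf_{t ≥ t₀} 2 (C e^{L t} δ + Θ(t))`. -/
theorem equi_attraction_rate_of_convergence
    {X : Type*} [MetricSpace X]
    (t₀ : ℝ) (ht₀ : 0 ≤ t₀)
    (T T₀ : ℝ → X → X)
    (A A₀ D : Set X)
    (hAne : A.Nonempty) (hA₀ne : A₀.Nonempty)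
    (hAbd : Bornology.IsBounded A) (hA₀bd : Bornology.IsBounded A₀)
    (hInv : ∀ t, t₀ ≤ t → T t '' A = A)
    (hInv₀ : ∀ t, t₀ ≤ t → T₀ t '' A₀ = A₀)
    (hAD : A ⊆ D) (hA₀D : A₀ ⊆ D)
    (Θ : ℝ → ℝ) (hΘpos : ∀ t, t₀ ≤ t → 0 < Θ t)
    (hAttr : ∀ t, t₀ ≤ t → ∀ x ∈ D, Metric.infDist (T t x) A ≤ Θ t)
    (hAttr₀ : ∀ t, t₀ ≤ t → ∀ x ∈ D, Metric.infDist (T₀ t x) A₀ ≤ Θ t)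
    (C L δ : ℝ) (hC : 0 < C) (hL : 0 < L) (hδ : 0 ≤ δ)
    (hComp : ∀ t, t₀ ≤ t → ∀ x ∈ D, ∀ y ∈ D,
      dist (T t x) (T₀ t y) ≤ C * Real.exp (L * t) * (dist x y + δ)) :
    (∀ t, t₀ ≤ t →
      Metric.hausdorffDist A A₀ ≤ C * Real.exp (L * t) * δ + Θ t) ∧
    Metric.hausdorffDist A A₀ ≤
      sInf {r : ℝ | ∃ t, t₀ ≤ t ∧ r = 2 * (C * Real.exp (L * t) * δ + Θ t)} := by
  have key : ∀ t, t₀ ≤ t →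
      Metric.hausdorffDist A A₀ ≤ C * Real.exp (L * t) * δ + Θ t := by
    intro t ht
    have hΘ := hΘpos t ht
    have hnn : 0 ≤ C * Real.exp (L * t) * δ := by positivity
    have hsame : ∀ x ∈ D, dist (T t x) (T₀ t x) ≤ C * Real.exp (L * t) * δ := by
      intro x hx
      simpa using hComp t ht x hx x hx
    apply Metric.hausdorffDist_le_of_infDist (by linarith)
    · intro a ha
      rw [← hInv t ht] at ha
      obtain ⟨x, hx, rfl⟩ := ha
      have h1 := Metric.infDist_le_infDist_add_dist (s := A₀) (x := T t x) (y := T₀ t x)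
      linarith [hsame x (hAD hx), hAttr₀ t ht x (hAD hx)]
    · intro b hb
      rw [← hInv₀ t ht] at hb
      obtain ⟨y, hy, rfl⟩ := hb
      have h1 := Metric.infDist_le_infDist_add_dist (s := A) (x := T₀ t y) (y := T t y)
      rw [dist_comm] at h1
      linarith [hsame y (hA₀D hy), hAttr t ht y (hA₀D hy)]
  refine ⟨key, le_csInf ⟨_, t₀, le_rfl, rfl⟩ ?_⟩
  rintro r ⟨t, ht, rfl⟩
  linarith [key t ht, Metric.hausdorffDist_nonneg (s := A) (t := A₀)]
end

section
/- Let X be a metric space, t₀ ≥ 0, and let T, T₀ : [t₀,∞) × X → X be two families of maps. Let A, A₀ ⊆ X be nonempty bounded sets with T(t)(A) = A and T₀(t)(A₀) = A₀ for every t ≥ t₀, and let D ⊆ X be a set with A ∪ A₀ ⊆ D. Assume there are constants c ≥ 1 and γ > 0 such that dist_H(T(t)(D), A) ≤ c e^{-γ t} and dist_H(T₀(t)(D), A₀) ≤ c e^{-γ t} for all t ≥ t₀ (exponential equi-attraction), and that there are constants C > 0, L > 0 and δ ≥ 0 such that d(T(t)x, T₀(t)y) ≤ C e^{L t} (d(x,y)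 + δ) for all x, y ∈ D and all t ≥ t₀. Then there exist constants c̄ > 0 and δ₁ > 0, depending only on C, L, c, γ and t₀ (and not on δ), such that whenever 0 ≤ δ ≤ δ₁ one has d_H(A, A₀) ≤ c̄ · δ^{γ/(γ+L)}. -/
/-!
By invariance every `a ∈ A` is `T t x` with `x ∈ A ⊆ D`, so comparing `T t x` with `T₀ t x` and
then using the attraction of `T₀` gives `d(a, A₀) ≤ C e^{L t} δ + c e^{-γ t}`; the other
semidistance is symmetric. This holds for every `t ≥ t₀` (`hausdorffDist_le_at_time`). For `δ > 0`
the two exponentials balance at `t = -log δ / (γ + L)`, where both equal `δ^{γ/(γ+L)}`; this time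
is admissible as soon as `δ ≤ e^{-(γ+L) t₀}`. For `δ = 0` one lets `t → ∞`.
-/

/-- One half of the time-`t` estimate: the distance of a point of the `S`-invariant set `A` to
the set `B` attracting the orbits of `R`, when `S` and `R` stay within `ε` of each other. -/
lemma infDist_le_of_image_eq {X : Type*} [MetricSpace X] {S R : X → X} {A B D : Set X}
    {ε η : ℝ} (hS : S '' A = A) (hAD : A ⊆ D)
    (hR : ∀ x ∈ D, Metric.infDist (R x) B ≤ η)
    (hSR : ∀ x ∈ D, dist (S x) (R x) ≤ ε) :
    ∀ a ∈ A, Metric.infDist a B ≤ ε + η := by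
  intro a ha
  rw [← hS] at ha
  obtain ⟨x, hx, rfl⟩ := ha
  have h := Metric.infDist_le_infDist_add_dist (s := B) (x := S x) (y := R x)
  linarith [hR x (hAD hx), hSR x (hAD hx)]

lemma hausdorffDist_le_at_time {X : Type*} [MetricSpace X] {S S₀ : X → X} {A A₀ D : Set X}
    {ε η : ℝ} (hε : 0 ≤ ε) (hη : 0 ≤ η) (hS : S '' A = A) (hS₀ : S₀ '' A₀ = A₀)
    (hAD : A ⊆ D) (hA₀D : A₀ ⊆ D)
    (hatt : ∀ x ∈ D, Metric.infDist (S x) A ≤ η)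
    (hatt₀ : ∀ x ∈ D, Metric.infDist (S₀ x) A₀ ≤ η)
    (hclose : ∀ x ∈ D, dist (S x) (S₀ x) ≤ ε) :
    Metric.hausdorffDist A A₀ ≤ ε + η :=
  Metric.hausdorffDist_le_of_infDist (by positivity)
    (infDist_le_of_image_eq hS hAD hatt₀ hclose)
    (infDist_le_of_image_eq hS₀ hA₀D hatt fun x hx => by rw [dist_comm]; exact hclose x hx)

/-- **Exponential equi-attraction gives the explicit rate `δ^{γ/(γ+L)}`**
(Corollary A.3).  Given constants `t₀ ≥ 0`, `C, L > 0`, `c ≥ 1`, `γ > 0`, there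
are constants `c̄ > 0` and `δ₁ > 0` (depending only on these data, not on `δ`
nor on the semigroups) such that: for any metric space `X`, families
`T, T₀ : [t₀,∞) × X → X` with invariant nonempty bounded sets `A, A₀ ⊆ D` that
are attracted exponentially with rate `c e^{-γ t}`, and any `0 ≤ δ ≤ δ₁` for
which the comparison `d(T(t)x, T₀(t)y) ≤ C e^{L t}(d(x,y) + δ)` holds on `D`,
one has `d_H(A, A₀) ≤ c̄ δ^{γ/(γ+L)}`. -/
theorem exponential_equi_attraction_rate
    (t₀ C L c γ : ℝ) (ht₀ : 0 ≤ t₀) (hC : 0 < C) (hL : 0 < L)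
    (hc : 1 ≤ c) (hγ : 0 < γ) :
    ∃ cbar > (0 : ℝ), ∃ δ₁ > (0 : ℝ),
      ∀ (X : Type) [MetricSpace X] (T T₀ : ℝ → X → X) (A A₀ D : Set X) (δ : ℝ),
        A.Nonempty → A₀.Nonempty →
        Bornology.IsBounded A → Bornology.IsBounded A₀ →
        (∀ t, t₀ ≤ t → T t '' A = A) →
        (∀ t, t₀ ≤ t → T₀ t '' A₀ = A₀) →
        A ⊆ D → A₀ ⊆ D →
        (∀ t, t₀ ≤ t → ∀ x ∈ D, Metric.infDist (T t x) A ≤ c * Real.exp (-γ * t)) →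
        (∀ t, t₀ ≤ t → ∀ x ∈ D, Metric.infDist (T₀ t x) A₀ ≤ c * Real.exp (-γ * t)) →
        0 ≤ δ → δ ≤ δ₁ →
        (∀ t, t₀ ≤ t → ∀ x ∈ D, ∀ y ∈ D,
          dist (T t x) (T₀ t y) ≤ C * Real.exp (L * t) * (dist x y + δ)) →
        Metric.hausdorffDist A A₀ ≤ cbar * δ ^ (γ / (γ + L)) := by
  refine ⟨C + c, by linarith, Real.exp (-(γ + L) * t₀), Real.exp_pos _, ?_⟩
  intro X _ T T₀ A A₀ D δ _ _ _ _ hT hT₀ hAD hA₀D hatt hatt₀ hδ hδ₁ hcmp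
  have hs : 0 < γ + L := by linarith
  have key : ∀ t, t₀ ≤ t → Metric.hausdorffDist A A₀ ≤
      C * Real.exp (L * t) * δ + c * Real.exp (-γ * t) := fun t ht =>
    hausdorffDist_le_at_time (by positivity) (by positivity) (hT t ht) (hT₀ t ht) hAD hA₀D
      (hatt t ht) (hatt₀ t ht) (fun x hx => by simpa using hcmp t ht x hx x hx)
  rcases hδ.eq_or_lt with rfl | hpos
  · rw [Real.zero_rpow (by positivity), mul_zero]
    have hlim : Filter.Tendsto (fun t : ℝ => c * Real.exp (-γ * t)) Filter.atTop (nhds 0) := by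
      have h := (Real.tendsto_exp_atBot.comp
        (Filter.tendsto_id.const_mul_atTop_of_neg (neg_lt_zero.mpr hγ))).const_mul c
      simpa using h
    refine ge_of_tendsto hlim ?_
    filter_upwards [Filter.eventually_ge_atTop t₀] with t ht
    simpa using key t ht
  · have ht : t₀ ≤ -Real.log δ / (γ + L) := by
      rw [le_div_iff₀ hs]
      have h := (Real.log_le_iff_le_exp hpos).mpr hδ₁
      linarith
    have h1 : Real.exp (L * (-Real.log δ / (γ + L))) * δ = δ ^ (γ / (γ + L)) := by
      nth_rewrite 2 [← Real.exp_log hpos]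
      rw [← Real.exp_add, Real.rpow_def_of_pos hpos]
      congr 1
      field_simp
      ring
    have h2 : Real.exp (-γ * (-Real.log δ / (γ + L))) = δ ^ (γ / (γ + L)) := by
      rw [Real.rpow_def_of_pos hpos]
      congr 1
      field_simp
    have h := key _ ht
    rw [mul_assoc, h1, h2] at h
    linarith
end

section
/- Let α > 0 and a ∈ (0,1). Then there exists a constant C > 0 such that for every ρ ∈ (0, e^{-1}] the integral ∫₀^∞ min( s^{-a}, ρ · s^{-1} ) e^{-α s} ds is finite and satisfies ∫₀^∞ min( s^{-a}, ρ s^{-1} ) e^{-α s} ds ≤ C ρ |log ρ|. -/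
/-!
Put `τ = ρ ^ (1 / (1 - a)) ≤ 1`, the point where `s ^ (-a)` and `ρ / s` cross, and split `(0, ∞)` at
`τ` and `1`. The kernel is dominated by `s ^ (-a)` on `(0, τ]`, by `ρ / s` on `(τ, 1]` and by
`ρ * exp (-α s)` on `(1, ∞)`; the integrals of these majorants are `ρ / (1 - a)`,
`ρ |log ρ| / (1 - a)` and at most `ρ / α`. Since `|log ρ| ≥ 1` for `ρ ≤ exp (-1)`, the constant
`C = 2 / (1 - a) + 1 / α` works.
-/

open MeasureTheory

lemma integrableOn_and_setIntegral_le_of_le {f g : ℝ → ℝ} {S : Set ℝ} (hS : MeasurableSet S)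
    (hf : Measurable f) (hf0 : ∀ s ∈ S, 0 ≤ f s) (hfg : ∀ s ∈ S, f s ≤ g s)
    (hg : IntegrableOn g S) :
    IntegrableOn f S ∧ ∫ s in S, f s ≤ ∫ s in S, g s := by
  have hi : IntegrableOn f S := by
    refine Integrable.mono' hg hf.aestronglyMeasurable ?_
    filter_upwards [ae_restrict_mem hS] with s hs
    rw [Real.norm_of_nonneg (hf0 s hs)]
    exact hfg s hs
  exact ⟨hi, setIntegral_mono_on hi hg hS hfg⟩

/-- **The singular-kernel estimate of order `ρ |log ρ|`** (used in Theorem 8.1).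
Let `α > 0` and `a ∈ (0,1)`.  Then there is a constant `C > 0` such that for
every `ρ ∈ (0, e^{-1}]` the kernel `s ↦ min(s^{-a}, ρ s^{-1}) e^{-α s}` is
integrable on `(0, ∞)` and
`∫₀^∞ min(s^{-a}, ρ s^{-1}) e^{-α s} ds ≤ C ρ |log ρ|`. -/
theorem singular_kernel_log_estimate
    (α a : ℝ) (hα : 0 < α) (ha : a ∈ Set.Ioo (0 : ℝ) 1) :
    ∃ C > (0 : ℝ), ∀ ρ : ℝ, 0 < ρ → ρ ≤ Real.exp (-1) →
      IntegrableOn (fun s : ℝ => min (s ^ (-a)) (ρ * s⁻¹) * Real.exp (-α * s))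
        (Set.Ioi (0 : ℝ)) ∧
      (∫ s in Set.Ioi (0 : ℝ), min (s ^ (-a)) (ρ * s⁻¹) * Real.exp (-α * s)) ≤
        C * ρ * |Real.log ρ| := by
  obtain ⟨_, ha1⟩ := ha
  have hb : 0 < 1 - a := by linarith
  refine ⟨2 / (1 - a) + 1 / α, by positivity, fun ρ hρ hρe => ?_⟩
  have hlog : Real.log ρ ≤ -1 := by
    rw [← Real.log_exp (-1)]
    exact Real.log_le_log hρ hρe
  have hρ1 : ρ ≤ 1 := hρe.trans (Real.exp_le_one_iff.2 (by norm_num))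
  set τ : ℝ := ρ ^ (1 / (1 - a)) with hτ
  have hτ0 : 0 < τ := Real.rpow_pos_of_pos hρ _
  have hτ1 : τ ≤ 1 := Real.rpow_le_one hρ.le hρ1 (by positivity)
  have hτρ : τ ^ (1 - a) = ρ := by
    rw [hτ, ← Real.rpow_mul hρ.le, one_div_mul_cancel hb.ne', Real.rpow_one]
  have hlogτ : Real.log τ = Real.log ρ / (1 - a) := by
    rw [hτ, Real.log_rpow hρ]; ring
  set f : ℝ → ℝ := fun s => min (s ^ (-a)) (ρ * s⁻¹) * Real.exp (-α * s) with hf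
  have hfm : Measurable f := by fun_prop
  have hmin : ∀ s : ℝ, 0 < s → 0 ≤ min (s ^ (-a)) (ρ * s⁻¹) := fun s hs => by positivity
  have hf0 : ∀ s : ℝ, 0 < s → 0 ≤ f s := fun s hs =>
    mul_nonneg (hmin s hs) (Real.exp_pos _).le
  have hfmin : ∀ s : ℝ, 0 < s → f s ≤ min (s ^ (-a)) (ρ * s⁻¹) := fun s hs =>
    mul_le_of_le_one_right (hmin s hs) (Real.exp_le_one_iff.2 (by nlinarith))
  obtain ⟨i1, b1⟩ := integrableOn_and_setIntegral_le_of_le (f := f) (g := fun s => s ^ (-a))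
    (S := Set.Ioc 0 τ) measurableSet_Ioc hfm (fun s hs => hf0 s hs.1)
    (fun s hs => (hfmin s hs.1).trans (min_le_left _ _))
    ((intervalIntegrable_iff_integrableOn_Ioc_of_le hτ0.le).1
      (intervalIntegral.intervalIntegrable_rpow' (by linarith)))
  obtain ⟨i2, b2⟩ := integrableOn_and_setIntegral_le_of_le (f := f) (g := fun s => ρ * s⁻¹)
    (S := Set.Ioc τ 1) measurableSet_Ioc hfm (fun s hs => hf0 s (hτ0.trans hs.1))
    (fun s hs => (hfmin s (hτ0.trans hs.1)).trans (min_le_right _ _))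
    ((intervalIntegrable_iff_integrableOn_Ioc_of_le hτ1).1
      ((intervalIntegrable_inv_iff.2 (Or.inr (by
        rw [Set.uIcc_of_le hτ1]
        exact fun h => absurd h.1 (not_le.2 hτ0)))).const_mul ρ))
  obtain ⟨i3, b3⟩ := integrableOn_and_setIntegral_le_of_le (f := f)
    (g := fun s => ρ * Real.exp (-α * s))
    (S := Set.Ioi 1) measurableSet_Ioi hfm (fun s hs => hf0 s (zero_lt_one.trans hs))
    (fun s hs => mul_le_mul_of_nonneg_right ((min_le_right _ _).trans
      (mul_le_of_le_one_right hρ.le (inv_le_one_of_one_le₀ (le_of_lt hs)))) (Real.exp_pos _).le)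
    ((integrableOn_exp_mul_Ioi (by linarith) 1).const_mul ρ)
  rw [← intervalIntegral.integral_of_le (f := fun s => s ^ (-a)) hτ0.le,
    integral_rpow (Or.inl (by linarith)),
    Real.zero_rpow (by linarith), show -a + 1 = 1 - a by ring, hτρ, sub_zero] at b1
  rw [← intervalIntegral.integral_of_le (f := fun s => ρ * s⁻¹) hτ1,
    intervalIntegral.integral_const_mul,
    integral_inv_of_pos hτ0 one_pos, one_div, Real.log_inv, hlogτ] at b2
  rw [integral_const_mul, integral_exp_mul_Ioi (by linarith), mul_one, neg_div_neg_eq] at b3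
  have b3' : ρ * (Real.exp (-α) / α) ≤ ρ * (1 / α) := by
    gcongr
    exact Real.exp_le_one_iff.2 (by linarith)
  have hU : Set.Ioi (0 : ℝ) = Set.Ioc 0 τ ∪ (Set.Ioc τ 1 ∪ Set.Ioi 1) := by
    rw [Set.Ioc_union_Ioi_eq_Ioi hτ1, Set.Ioc_union_Ioi_eq_Ioi hτ0.le]
  have hU' : Set.Ioc τ 1 ∪ Set.Ioi 1 = Set.Ioi τ := Set.Ioc_union_Ioi_eq_Ioi hτ1
  have i23 : IntegrableOn f (Set.Ioc τ 1 ∪ Set.Ioi 1) := i2.union i3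
  refine ⟨hU ▸ i1.union i23, ?_⟩
  rw [hU, setIntegral_union (by rw [hU']; exact Set.Ioc_disjoint_Ioi le_rfl)
    (measurableSet_Ioc.union measurableSet_Ioi) i1 i23,
    setIntegral_union (Set.Ioc_disjoint_Ioi le_rfl) measurableSet_Ioi i2 i3,
    abs_of_neg (by linarith)]
  -- The first and third pieces carry no logarithm; they are absorbed using `1 ≤ -log ρ`.
  have h0 : 0 ≤ (ρ / (1 - a) + ρ * (1 / α)) * (-Real.log ρ - 1) :=
    mul_nonneg (by positivity) (by linarith)
  have e : (2 / (1 - a) + 1 / α) * ρ * -Real.log ρ =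
      ρ / (1 - a) + ρ * -(Real.log ρ / (1 - a)) + ρ * (1 / α)
        + (ρ / (1 - a) + ρ * (1 / α)) * (-Real.log ρ - 1) := by ring
  linarith
end

section
/- Let X be a metric space, U ⊆ X, and let T₁, T₂ : X → X be maps. Let L > 0, δ₀ > 0 and let δ be a real number with 0 < δ ≤ δ₀ and d(T₁ u, T₂ u) ≤ δ for every u ∈ U. Let A₁, A₂ ⊆ U be nonempty bounded sets and assume, for each i ∈ {1,2}: (a) T_i has the Lipschitz Shadowing Property on U with parameters L, δ₀, i.e. for every δ' ∈ (0, δ₀] and every sequence (x_k)_{k∈ℤ} with x_k ∈ U and d(T_i(x_k), x_{k+1}) ≤ δ' for all k ∈ ℤ, there exists a sequence (z_k)_{k∈ℤ} in X with z_{k+1} = T_i(z_k) and d(z_k, x_k) ≤ L δ' for all k ∈ ℤ; (b) every point of A_i lies on a full trajectory of T_i contained in A_i, i.e. for every y ∈ A_i there is a sequence (y_k)_{k∈ℤ} in A_i with y_{k+1} = T_i(y_k) for all k and y₀ = y; (c) every full trajectory of T_i with bounded range is contained in A_i, i.e. if (z_k)_{k∈ℤ} satisfies z_{k+1} = T_i(z_k)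 for all k and {z_k : k ∈ ℤ} is bounded, then z_k ∈ A_i for all k. Then the symmetric Hausdorff distance satisfies d_H(A₁, A₂) ≤ L δ. -/
/-!
A full trajectory of one map inside its attractor is a `δ`-pseudo-trajectory of the other map, since
the maps are `δ`-close on `U`. It is therefore shadowed within `L * δ` by a true trajectory of the
other map, which stays near a bounded set, hence is bounded, hence lies in the other attractor.
Evaluating at time `0` gives each one-sided estimate between the attractors.
-/

/-- **Lipschitz shadowing controls the Hausdorff distance of attractors**
(Proposition B.5).  Let `T 0, T 1 : X → X` be maps with `d(T 0 u, T 1 u) ≤ δ`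
on `U`, both having the Lipschitz Shadowing Property on `U` with parameters
`L, δ₀`, where `0 < δ ≤ δ₀`.  Let `A 0, A 1 ⊆ U` be nonempty bounded sets such
that every point of `A i` lies on a full trajectory of `T i` inside `A i`, and
every full trajectory of `T i` with bounded range is contained in `A i`.
Then `d_H(A 0, A 1) ≤ L δ`. -/
theorem shadowing_hausdorff_distance_of_attractors
    {X : Type*} [MetricSpace X] (U : Set X)
    (T : Fin 2 → X → X) (A : Fin 2 → Set X)
    (L δ₀ δ : ℝ) (hL : 0 < L) (hδ₀ : 0 < δ₀) (hδ : 0 < δ) (hδδ₀ : δ ≤ δ₀)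
    (hclose : ∀ u ∈ U, dist (T 0 u) (T 1 u) ≤ δ)
    (hAU : ∀ i, A i ⊆ U)
    (hAne : ∀ i, (A i).Nonempty)
    (hAbd : ∀ i, Bornology.IsBounded (A i))
    (hshadow : ∀ i, ∀ δ' : ℝ, 0 < δ' → δ' ≤ δ₀ → ∀ x : ℤ → X,
      (∀ k, x k ∈ U) → (∀ k, dist (T i (x k)) (x (k + 1)) ≤ δ') →
      ∃ z : ℤ → X, (∀ k, z (k + 1) = T i (z k)) ∧ ∀ k, dist (z k) (x k) ≤ L * δ')
    (htraj : ∀ i, ∀ y ∈ A i, ∃ w : ℤ → X,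
      (∀ k, w k ∈ A i) ∧ (∀ k, w (k + 1) = T i (w k)) ∧ w 0 = y)
    (hbddtraj : ∀ i, ∀ z : ℤ → X, (∀ k, z (k + 1) = T i (z k)) →
      Bornology.IsBounded (Set.range z) → ∀ k, z k ∈ A i) :
    Metric.hausdorffDist (A 0) (A 1) ≤ L * δ := by
  have key : ∀ i j : Fin 2, (∀ u ∈ U, dist (T j u) (T i u) ≤ δ) →
      ∀ y ∈ A i, ∃ z ∈ A j, dist y z ≤ L * δ := by
    intro i j hij y hy
    obtain ⟨w, hwA, hw, rfl⟩ := htraj i y hy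
    obtain ⟨z, hz, hzw⟩ := hshadow j δ hδ hδδ₀ w (fun k => hAU i (hwA k))
      (fun k => by rw [hw k]; exact hij _ (hAU i (hwA k)))
    refine ⟨z 0, hbddtraj j z hz ?_ 0, by rw [dist_comm]; exact hzw 0⟩
    refine ((hAbd i).cthickening (δ := L * δ)).subset ?_
    rintro _ ⟨k, rfl⟩
    exact Metric.mem_cthickening_of_dist_le _ _ _ _ (hwA k) (hzw k)
  exact Metric.hausdorffDist_le_of_mem_dist (by positivity)
    (key 0 1 fun u hu => by rw [dist_comm]; exact hclose u hu) (key 1 0 hclose)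
end
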